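/- Let h be a real-valued C^2 function on an open subset of ℝ², and for w > 0 define the end chart α(u,w) = (u/w, h(u,w)/w, 1/w) ∈ ℝ³. Then the triple products of the second partial derivatives of α with α_u and α_w satisfy det[α_uu, α_u, α_w] = h_uu/w⁴, det[α_uw, α_u, α_w] = h_uw/w⁴, and det[α_ww, α_u, α_w] = h_ww/w⁴, where det[X,Y,Z] denotes the determinant of the 3×3 matrix with rows (or columns) X, Y, Z in ℝ³, and h_uu, h_uw, h_ww are the second partial derivatives of h at (u,w). Consequently the second fundamental form coefficients e = det[α_uu, α_u, α_w]/|α_u × α_w|, f = det[α_uw, α_u, α_w]/|α_u × α_w|, g = det[α_ww, α_u, α_w]/|α_u × α_w| equal h_uu/(w⁴√(EG−F²)), h_uw/(w⁴√(EG−F²)), h_ww/(w⁴√(EG−F²)) respectively, where EG − F² = |α_u × α_w|². -/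

import Mathlib

noncomputable section

/-- Euclidean dot product on `ℝ³` (as `Fin 3 → ℝ`). -/
def dot3 (x y : Fin 3 → ℝ) : ℝ := x 0 * y 0 + x 1 * y 1 + x 2 * y 2

/-- Standard cross product on `ℝ³`. -/
def cross3 (x y : Fin 3 → ℝ) : Fin 3 → ℝ :=
  ![x 1 * y 2 - x 2 * y 1, x 2 * y 0 - x 0 * y 2, x 0 * y 1 - x 1 * y 0]

/-- Triple (determinant) product of three vectors in `ℝ³`. -/
def det3 (x y z : Fin 3 → ℝ) : ℝ := Matrix.det (Matrix.of ![x, y, z])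

/-- Partial derivative with respect to the first variable. -/
def pdu (f : ℝ × ℝ → ℝ) (p : ℝ × ℝ) : ℝ := fderiv ℝ f p (1, 0)

/-- Partial derivative with respect to the second variable. -/
def pdw (f : ℝ × ℝ → ℝ) (p : ℝ × ℝ) : ℝ := fderiv ℝ f p (0, 1)

/-- Partial derivative (vector valued) with respect to the first variable. -/
def vdu (f : ℝ × ℝ → Fin 3 → ℝ) (p : ℝ × ℝ) : Fin 3 → ℝ := fderiv ℝ f p (1, 0)

/-- Partial derivative (vector valued) with respect to the second variable. -/
def vdw (f : ℝ × ℝ → Fin 3 → ℝ) (p : ℝ × ℝ) : Fin 3 → ℝ := fderiv ℝ f p (0, 1)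

/-!
The end chart is `α = w⁻¹ β` with `β = (u, h, 1)`. Differentiating `w α = β` twice, where `w` is
linear, shows that `w ∂ₓ∂ᵧα` differs from `∂ₓ∂ᵧβ = (0, ∂ₓ∂ᵧh, 0)` only by first derivatives of `α`,
which are combinations of `α_u` and `α_w` and so contribute nothing to the triple product with them.
Hence `det[∂ₓ∂ᵧα, α_u, α_w] = w⁻¹ det[(0, ∂ₓ∂ᵧh, 0), α_u, α_w]` for any two directions at once.
-/

open Filter Topology

section CentralProjection

variable {𝕜 E F : Type*} [NontriviallyNormedField 𝕜] [NormedAddCommGroup E] [NormedSpace 𝕜 E]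
  [NormedAddCommGroup F] [NormedSpace 𝕜 F]

/-- The map `ℓ⁻¹ β` obtained by dividing the homogeneous coordinates `(β, ℓ)` by the last one,
i.e. by centrally projecting onto the hyperplane where the last coordinate is `1`. It takes the
junk value `0` on the kernel of `ℓ`. -/
def centralProjection (ℓ : E →L[𝕜] 𝕜) (β : E → F) (q : E) : F := (ℓ q)⁻¹ • β q

variable {ℓ : E →L[𝕜] 𝕜} {β : E → F} {p : E}

theorem differentiableAt_centralProjection (hp : ℓ p ≠ 0) (hβ : DifferentiableAt 𝕜 β p) :
    DifferentiableAt 𝕜 (centralProjection ℓ β) p :=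
  (ℓ.differentiableAt.fun_inv hp).fun_smul hβ

theorem fderiv_centralProjection_apply (hp : ℓ p ≠ 0) (hβ : DifferentiableAt 𝕜 β p) (v : E) :
    fderiv 𝕜 (centralProjection ℓ β) p v =
      (ℓ p)⁻¹ • (fderiv 𝕜 β p v - ℓ v • centralProjection ℓ β p) := by
  have clear_denominator : (fun q => ℓ q • centralProjection ℓ β q) =ᶠ[𝓝 p] β := by
    filter_upwards [ℓ.continuous.continuousAt.eventually_ne hp] with q hq
    exact smul_inv_smul₀ hq (β q)
  have leibniz : fderiv 𝕜 β p v =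
      ℓ p • fderiv 𝕜 (centralProjection ℓ β) p v + ℓ v • centralProjection ℓ β p := by
    rw [← clear_denominator.fderiv_eq,
      fderiv_fun_smul ℓ.differentiableAt (differentiableAt_centralProjection hp hβ)]
    simp
  rw [leibniz, add_sub_cancel_right, inv_smul_smul₀ hp]

theorem fderiv_fderiv_centralProjection_apply (hp : ℓ p ≠ 0)
    (hβ : ∀ᶠ q in 𝓝 p, DifferentiableAt 𝕜 β q) {v : E}
    (hβv : DifferentiableAt 𝕜 (fun q => fderiv 𝕜 β q v) p) (w : E) :
    fderiv 𝕜 (fun q => fderiv 𝕜 (centralProjection ℓ β) q v) p w =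
      (ℓ p)⁻¹ • (fderiv 𝕜 (fun q => fderiv 𝕜 β q v) p w
        - ℓ v • fderiv 𝕜 (centralProjection ℓ β) p w
        - ℓ w • fderiv 𝕜 (centralProjection ℓ β) p v) := by
  -- The first derivative is again a central projection, so the quotient rule can be iterated.
  have first_derivative : (fun q => fderiv 𝕜 (centralProjection ℓ β) q v) =ᶠ[𝓝 p]
      centralProjection ℓ (fun q => fderiv 𝕜 β q v - ℓ v • centralProjection ℓ β q) := by
    filter_upwards [hβ, ℓ.continuous.continuousAt.eventually_ne hp] with q hβq hq
    exact fderiv_centralProjection_apply hq hβq v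
  have hα := (differentiableAt_centralProjection hp hβ.self_of_nhds).fun_const_smul (ℓ v)
  rw [first_derivative.fderiv_eq, fderiv_centralProjection_apply hp (hβv.fun_sub hα),
    ← first_derivative.eq_of_nhds, fderiv_fun_sub hβv hα,
    fderiv_fun_const_smul (differentiableAt_centralProjection hp hβ.self_of_nhds)]
  rfl

end CentralProjection

section Vec3

variable {𝕜 E F : Type*} [NontriviallyNormedField 𝕜] [NormedAddCommGroup E] [NormedSpace 𝕜 E]
  [NormedAddCommGroup F] [NormedSpace 𝕜 F]

theorem hasFDerivAt_vec3 {a b c : E → F} {a' b' c' : E →L[𝕜] F} {p : E}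
    (ha : HasFDerivAt a a' p) (hb : HasFDerivAt b b' p) (hc : HasFDerivAt c c' p) :
    HasFDerivAt (fun q => ![a q, b q, c q]) (ContinuousLinearMap.pi ![a', b', c']) p := by
  rw [hasFDerivAt_pi']
  intro i
  fin_cases i
  exacts [ha, hb, hc]

theorem pi_vec3_apply (a b c : E →L[𝕜] F) (v : E) :
    ContinuousLinearMap.pi ![a, b, c] v = ![a v, b v, c v] := by
  ext i
  fin_cases i <;> rfl

end Vec3

section TripleProduct

theorem det3_eq (x y z : Fin 3 → ℝ) :
    det3 x y z = x 0 * (y 1 * z 2 - y 2 * z 1) - x 1 * (y 0 * z 2 - y 2 * z 0)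
      + x 2 * (y 0 * z 1 - y 1 * z 0) := by
  simp only [det3, Matrix.det_fin_three, Matrix.of_apply, Matrix.cons_val]
  ring

theorem det3_smul_left (c : ℝ) (x y z : Fin 3 → ℝ) : det3 (c • x) y z = c * det3 x y z := by
  simp only [det3_eq, Pi.smul_apply, smul_eq_mul]
  ring

theorem det3_sub_left (x x' y z : Fin 3 → ℝ) :
    det3 (x - x') y z = det3 x y z - det3 x' y z := by
  simp only [det3_eq, Pi.sub_apply]
  ring

theorem det3_map_basis (A : ℝ × ℝ →ₗ[ℝ] Fin 3 → ℝ) (v : ℝ × ℝ) :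
    det3 (A v) (A (1, 0)) (A (0, 1)) = 0 := by
  have decomposition : A v = v.1 • A (1, 0) + v.2 • A (0, 1) := by
    simp [← map_smul, ← map_add]
  simp only [decomposition, det3_eq, Pi.add_apply, Pi.smul_apply, smul_eq_mul]
  ring

theorem dot3_self_mul_dot3_self_sub_sq (x y : Fin 3 → ℝ) :
    dot3 x x * dot3 y y - dot3 x y ^ 2 = dot3 (cross3 x y) (cross3 x y) := by
  simp only [dot3, cross3, Matrix.cons_val]
  ring

end TripleProduct

theorem vdu_eventuallyEq {f g : ℝ × ℝ → Fin 3 → ℝ} {p : ℝ × ℝ} (hfg : f =ᶠ[𝓝 p] g) :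
    vdu f =ᶠ[𝓝 p] vdu g :=
  hfg.fderiv.fun_comp (· (1, 0))

theorem vdw_eventuallyEq {f g : ℝ × ℝ → Fin 3 → ℝ} {p : ℝ × ℝ} (hfg : f =ᶠ[𝓝 p] g) :
    vdw f =ᶠ[𝓝 p] vdw g :=
  hfg.fderiv.fun_comp (· (0, 1))

section EndChart

/-- The numerator `β = (u, h, 1)` of the end chart, whose homogeneous coordinates are
`[u : h : 1 : w]`. -/
def endLift (h : ℝ × ℝ → ℝ) (q : ℝ × ℝ) : Fin 3 → ℝ := ![q.1, h q, 1]

/-- The end chart `(u / w, h / w, 1 / w)` of `h`, as a central projection; see `endChart_apply`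
for the coordinates. -/
def endChart (h : ℝ × ℝ → ℝ) : ℝ × ℝ → Fin 3 → ℝ :=
  centralProjection (ContinuousLinearMap.snd ℝ ℝ ℝ) (endLift h)

variable {h : ℝ × ℝ → ℝ} {p : ℝ × ℝ}

theorem endChart_apply (h : ℝ × ℝ → ℝ) (q : ℝ × ℝ) :
    endChart h q = ![q.1 / q.2, h q / q.2, 1 / q.2] := by
  simp [endChart, centralProjection, endLift, div_eq_inv_mul]

theorem hasFDerivAt_endLift (hh : DifferentiableAt ℝ h p) :
    HasFDerivAt (endLift h)
      (ContinuousLinearMap.pi ![ContinuousLinearMap.fst ℝ ℝ ℝ, fderiv ℝ h p, 0]) p :=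
  hasFDerivAt_vec3 hasFDerivAt_fst hh.hasFDerivAt (hasFDerivAt_const 1 p)

theorem fderiv_endLift_apply (hh : DifferentiableAt ℝ h p) (v : ℝ × ℝ) :
    fderiv ℝ (endLift h) p v = ![v.1, fderiv ℝ h p v, 0] := by
  rw [(hasFDerivAt_endLift hh).fderiv, pi_vec3_apply]
  rfl

theorem hasFDerivAt_fderiv_endLift_apply (hh : ∀ᶠ q in 𝓝 p, DifferentiableAt ℝ h q) {v : ℝ × ℝ}
    (hhv : DifferentiableAt ℝ (fun q => fderiv ℝ h q v) p) :
    HasFDerivAt (fun q => fderiv ℝ (endLift h) q v)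
      (ContinuousLinearMap.pi ![0, fderiv ℝ (fun q => fderiv ℝ h q v) p, 0]) p :=
  (hasFDerivAt_vec3 (hasFDerivAt_const v.1 p) hhv.hasFDerivAt (hasFDerivAt_const 0 p))
    |>.congr_of_eventuallyEq (hh.mono fun _ hq => fderiv_endLift_apply hq v)

theorem fderiv_endChart_apply (hp : p.2 ≠ 0) (hh : DifferentiableAt ℝ h p) (v : ℝ × ℝ) :
    fderiv ℝ (endChart h) p v =
      p.2⁻¹ • (![v.1, fderiv ℝ h p v, 0] - v.2 • ![p.1 / p.2, h p / p.2, 1 / p.2]) := by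
  rw [← endChart_apply, ← fderiv_endLift_apply hh]
  exact fderiv_centralProjection_apply hp (hasFDerivAt_endLift hh).differentiableAt v

theorem det3_second_coord_vdu_vdw_endChart (hp : p.2 ≠ 0) (hh : DifferentiableAt ℝ h p) (t : ℝ) :
    det3 ![0, t, 0] (vdu (endChart h) p) (vdw (endChart h) p) = t / p.2 ^ 3 := by
  simp only [vdu, vdw, fderiv_endChart_apply hp hh, det3_eq, Pi.smul_apply, Pi.sub_apply,
    smul_eq_mul, Matrix.cons_val]
  field_simp
  ring

theorem fderiv_fderiv_endChart_apply (hp : p.2 ≠ 0) (hh : ∀ᶠ q in 𝓝 p, DifferentiableAt ℝ h q)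
    {v : ℝ × ℝ} (hhv : DifferentiableAt ℝ (fun q => fderiv ℝ h q v) p) (w : ℝ × ℝ) :
    fderiv ℝ (fun q => fderiv ℝ (endChart h) q v) p w =
      p.2⁻¹ • (![0, fderiv ℝ (fun q => fderiv ℝ h q v) p w, 0]
        - v.2 • fderiv ℝ (endChart h) p w - w.2 • fderiv ℝ (endChart h) p v) := by
  have hβv := hasFDerivAt_fderiv_endLift_apply hh hhv
  have lift_second_derivative : fderiv ℝ (fun q => fderiv ℝ (endLift h) q v) p w =
      ![0, fderiv ℝ (fun q => fderiv ℝ h q v) p w, 0] := by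
    rw [hβv.fderiv, pi_vec3_apply]
    rfl
  rw [← lift_second_derivative]
  exact fderiv_fderiv_centralProjection_apply hp
    (hh.mono fun _ hq => (hasFDerivAt_endLift hq).differentiableAt) hβv.differentiableAt w

theorem det3_fderiv_fderiv_endChart (hp : p.2 ≠ 0) (hh : ∀ᶠ q in 𝓝 p, DifferentiableAt ℝ h q)
    {v : ℝ × ℝ} (hhv : DifferentiableAt ℝ (fun q => fderiv ℝ h q v) p) (w : ℝ × ℝ) :
    det3 (fderiv ℝ (fun q => fderiv ℝ (endChart h) q v) p w)
        (vdu (endChart h) p) (vdw (endChart h) p) =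
      fderiv ℝ (fun q => fderiv ℝ h q v) p w / p.2 ^ 4 := by
  have tangent (a : ℝ × ℝ) :
      det3 (fderiv ℝ (endChart h) p a) (vdu (endChart h) p) (vdw (endChart h) p) = 0 :=
    det3_map_basis (fderiv ℝ (endChart h) p).toLinearMap a
  rw [fderiv_fderiv_endChart_apply hp hh hhv, det3_smul_left, det3_sub_left, det3_sub_left,
    det3_smul_left, det3_smul_left, tangent, tangent,
    det3_second_coord_vdu_vdw_endChart hp hh.self_of_nhds]
  field_simp
  ring

end EndChart

theorem stmt_2_general {h : ℝ × ℝ → ℝ} {α : ℝ × ℝ → Fin 3 → ℝ} {p : ℝ × ℝ} (hp : p.2 ≠ 0)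
    (hh : ∀ᶠ q in 𝓝 p, DifferentiableAt ℝ h q) (hh' : DifferentiableAt ℝ (fderiv ℝ h) p)
    (hα : ∀ᶠ q in 𝓝 p, α q = ![q.1 / q.2, h q / q.2, 1 / q.2]) :
    det3 (vdu (vdu α) p) (vdu α p) (vdw α p) = pdu (pdu h) p / p.2 ^ 4 ∧
    det3 (vdw (vdu α) p) (vdu α p) (vdw α p) = pdw (pdu h) p / p.2 ^ 4 ∧
    det3 (vdw (vdw α) p) (vdu α p) (vdw α p) = pdw (pdw h) p / p.2 ^ 4 ∧
    (let E := dot3 (vdu α p) (vdu α p)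
     let F := dot3 (vdu α p) (vdw α p)
     let G := dot3 (vdw α p) (vdw α p)
     let nrm := Real.sqrt
       (dot3 (cross3 (vdu α p) (vdw α p)) (cross3 (vdu α p) (vdw α p)))
     E * G - F ^ 2 =
       dot3 (cross3 (vdu α p) (vdw α p)) (cross3 (vdu α p) (vdw α p)) ∧
     det3 (vdu (vdu α) p) (vdu α p) (vdw α p) / nrm =
       pdu (pdu h) p / (p.2 ^ 4 * Real.sqrt (E * G - F ^ 2)) ∧
     det3 (vdw (vdu α) p) (vdu α p) (vdw α p) / nrm =
       pdw (pdu h) p / (p.2 ^ 4 * Real.sqrt (E * G - F ^ 2)) ∧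
     det3 (vdw (vdw α) p) (vdu α p) (vdw α p) / nrm =
       pdw (pdw h) p / (p.2 ^ 4 * Real.sqrt (E * G - F ^ 2))) := by
  have hαh : α =ᶠ[𝓝 p] endChart h := hα.mono fun q hq => hq.trans (endChart_apply h q).symm
  have hu := vdu_eventuallyEq hαh
  have hw := vdw_eventuallyEq hαh
  have det3_fderiv_fderiv (v w : ℝ × ℝ) :=
    det3_fderiv_fderiv_endChart hp hh (hh'.clm_apply (differentiableAt_const v)) w
  have huu : det3 (vdu (vdu α) p) (vdu α p) (vdw α p) = pdu (pdu h) p / p.2 ^ 4 := by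
    rw [(vdu_eventuallyEq hu).eq_of_nhds, hu.eq_of_nhds, hw.eq_of_nhds]
    exact det3_fderiv_fderiv (1, 0) (1, 0)
  have huw : det3 (vdw (vdu α) p) (vdu α p) (vdw α p) = pdw (pdu h) p / p.2 ^ 4 := by
    rw [(vdw_eventuallyEq hu).eq_of_nhds, hu.eq_of_nhds, hw.eq_of_nhds]
    exact det3_fderiv_fderiv (1, 0) (0, 1)
  have hww : det3 (vdw (vdw α) p) (vdu α p) (vdw α p) = pdw (pdw h) p / p.2 ^ 4 := by
    rw [(vdw_eventuallyEq hw).eq_of_nhds, hu.eq_of_nhds, hw.eq_of_nhds]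
    exact det3_fderiv_fderiv (0, 1) (0, 1)
  refine ⟨huu, huw, hww, dot3_self_mul_dot3_self_sub_sq _ _, ?_, ?_, ?_⟩ <;>
    simp only [huu, huw, hww, dot3_self_mul_dot3_self_sub_sq, div_div]

/-- triple products and second fundamental form coefficients of the end chart
`α(u,w) = (u/w, h(u,w)/w, 1/w)`. -/
theorem stmt_2 (U : Set (ℝ × ℝ)) (hU : IsOpen U) (h : ℝ × ℝ → ℝ)
    (hh : ContDiffOn ℝ 2 h U)
    (α : ℝ × ℝ → Fin 3 → ℝ)
    (hα : ∀ p : ℝ × ℝ, 0 < p.2 → α p = ![p.1 / p.2, h p / p.2, 1 / p.2]) :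
    ∀ p ∈ U, 0 < p.2 →
      det3 (vdu (vdu α) p) (vdu α p) (vdw α p) = pdu (pdu h) p / p.2 ^ 4 ∧
      det3 (vdw (vdu α) p) (vdu α p) (vdw α p) = pdw (pdu h) p / p.2 ^ 4 ∧
      det3 (vdw (vdw α) p) (vdu α p) (vdw α p) = pdw (pdw h) p / p.2 ^ 4 ∧
      (let E := dot3 (vdu α p) (vdu α p)
       let F := dot3 (vdu α p) (vdw α p)
       let G := dot3 (vdw α p) (vdw α p)
       let nrm := Real.sqrt
         (dot3 (cross3 (vdu α p) (vdw α p)) (cross3 (vdu α p) (vdw α p)))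
       E * G - F ^ 2 =
         dot3 (cross3 (vdu α p) (vdw α p)) (cross3 (vdu α p) (vdw α p)) ∧
       det3 (vdu (vdu α) p) (vdu α p) (vdw α p) / nrm =
         pdu (pdu h) p / (p.2 ^ 4 * Real.sqrt (E * G - F ^ 2)) ∧
       det3 (vdw (vdu α) p) (vdu α p) (vdw α p) / nrm =
         pdw (pdu h) p / (p.2 ^ 4 * Real.sqrt (E * G - F ^ 2)) ∧
       det3 (vdw (vdw α) p) (vdu α p) (vdw α p) / nrm =
         pdw (pdw h) p / (p.2 ^ 4 * Real.sqrt (E * G - F ^ 2))) := by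
  intro p hpU hp
  have hhp : ContDiffAt ℝ 2 h p := hh.contDiffAt (hU.mem_nhds hpU)
  exact stmt_2_general hp.ne'
    ((hhp.eventually (by decide)).mono fun _ hq => hq.differentiableAt two_ne_zero)
    ((hhp.fderiv_right le_rfl).differentiableAt one_ne_zero)
    ((continuousAt_snd.eventually_const_lt hp).mono hα)
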